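/- Consider Bernoulli bond percolation on ℤ² in which each bond independently takes the value 0 ('open') with probability p and 1 ('closed') with probability 1−p. For any ε>0, there exists p₀=p₀(ε)∈(0,1/2) such that for all p∈[0,p₀] and all sufficiently large n (depending on ε): P_{ℤ²,p}^{bond}[ D(0,(n,0)) ≤ (1+ε)n ] ≥ 1−ε. -/

import Mathlib

/-!
Bernoulli bond percolation on `ℤ²` and chemical distance (Proposition on `D(0,n)`).
Since this Mathlib does not provide infinite product measures, the Bernoulli bond
product measures are characterised by the predicate `IsBernoulliBondFamily`
(finite-dimensional distributions), which determines them uniquely.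
-/

open MeasureTheory Filter Topology Set
open scoped ENNReal Classical

noncomputable section

namespace Z2BondPercolation

/-- Vertices of the square lattice `ℤ²`. -/
abbrev ZV := ℤ × ℤ

/-- Adjacency in `ℤ²`: Euclidean (equivalently `ℓ¹`) distance one. -/
def adjZ (a b : ZV) : Prop := (a.1 - b.1).natAbs + (a.2 - b.2).natAbs = 1

/-- Bonds of `ℤ²`, encoded as a vertex together with a direction:
`(a, true)` is the bond from `a` to `a + (1,0)`, and `(a, false)` the bond from `a` to
`a + (0,1)`. -/
abbrev Bond := ZV × Bool

/-- A bond configuration: `ω e = true` means the bond `e` is open (value 0), `ω e =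
false` means it is closed (value 1). -/
abbrev CfgZ := Bond → Bool

/-- The bond joining two adjacent vertices. -/
def bondOf (a b : ZV) : Bond :=
  if b = (a.1 + 1, a.2) then (a, true)
  else if b = (a.1 - 1, a.2) then (b, true)
  else if b = (a.1, a.2 + 1) then (a, false)
  else (b, false)

/-- `IsBernoulliBondFamily P` says that for each `p ∈ [0,1]`, `P p` is the Bernoulli
bond product probability measure under which bonds are independently open (value 0)
with probability `p` and closed (value 1) with probability `1 - p`.  This characterises
`P p` uniquely. -/
def IsBernoulliBondFamily (P : ℝ → Measure CfgZ) : Prop :=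
  ∀ p : ℝ, 0 ≤ p → p ≤ 1 →
    IsProbabilityMeasure (P p) ∧
    ∀ F : Finset Bond, ∀ b : Bond → Bool,
      P p {ω : CfgZ | ∀ e ∈ F, ω e = b e}
        = ∏ e ∈ F, ENNReal.ofReal (if b e then p else 1 - p)

/-- One step of a closed path. -/
def closedStep (ω : CfgZ) (a b : ZV) : Prop := adjZ a b ∧ ω (bondOf a b) = false

/-- The chemical distance `D(u,v)`: the minimal number of bonds of a closed lattice path
joining `u` to `v` (`∞` if there is none). -/
def chemDist (ω : CfgZ) (u v : ZV) : ℝ≥0∞ :=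
  ⨅ γ : {γ : List ZV // γ.Chain' (closedStep ω) ∧ γ.head? = some u ∧ γ.getLast? = some v},
    ((γ.1.length - 1 : ℕ) : ℝ≥0∞)

/-!
Call the lower left endpoints of open bonds bad. A king-connected cluster of bad vertices can be
bypassed along its outer boundary, which consists of good vertices and has at most eight vertices
per vertex of the cluster. So let `B` be the union of the bad clusters meeting the axis segment from
`(0, 0)` to `(n, 0)`, follow the segment and go around `B`: this costs at most `n + 8 |B|` bonds.

That the axis minus `B` together with the outer boundary of `B` connects the two endpoints is a
planarity statement, valid when `B` is finite and misses the columns above and below the endpoints.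
For the indicator function of the component of `(0, 0)`, the gradient restricted to the edges that
meet `B` is a closed discrete one-form. Its integral along the axis equals the integral along a row
above `B`, which is zero; hence the indicator takes the same value at both endpoints.

A Peierls count of self-avoiding king paths shows that a bad cluster has mean size `O(p)`. Markov's
inequality then makes `8 |B| ≤ ε n` likely, and the exponential decay of the cluster radius makes it
unlikely that `B` reaches the column of an endpoint.
-/

section Cluster

variable {V : Type*} {G : SimpleGraph V} {S X A B : Set V} {v w x : V}

/-- The connected component of `v` in the subgraph of `G` induced on `S`, as a set of vertices of
`G`; it is empty when `v ∉ S`. -/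
def cluster (G : SimpleGraph V) (S : Set V) (v : V) : Set V :=
  {w | ∃ p : G.Walk v w, ∀ u ∈ p.support, u ∈ S}

lemma mem_cluster_self (hv : v ∈ S) : v ∈ cluster G S v :=
  ⟨.nil, by simpa using hv⟩

lemma mem_cluster_of_adj (hw : w ∈ cluster G S v) (hwx : G.Adj w x) (hx : x ∈ S) :
    x ∈ cluster G S v := by
  obtain ⟨p, hp⟩ := hw
  refine ⟨p.concat hwx, fun u hu ↦ ?_⟩
  rw [SimpleGraph.Walk.support_concat, List.mem_append, List.mem_singleton] at hu
  exact hu.elim (hp u) fun h ↦ h ▸ hx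

lemma mem_cluster_iff_of_adj (hwx : G.Adj w x) (hw : w ∈ S) (hx : x ∈ S) :
    w ∈ cluster G S v ↔ x ∈ cluster G S v :=
  ⟨fun h ↦ mem_cluster_of_adj h hwx hx, fun h ↦ mem_cluster_of_adj h hwx.symm hw⟩

lemma exists_isPath_of_mem_cluster (hw : w ∈ cluster G S v) :
    ∃ p : G.Walk v w, p.IsPath ∧ ∀ u ∈ p.support, u ∈ S := by
  obtain ⟨p, hp⟩ := hw
  exact ⟨p.bypass, p.bypass_isPath, fun u hu ↦ hp u (p.support_bypass_subset_support hu)⟩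

/-- The union of the clusters of `X` that meet `A`. -/
def clusterHull (G : SimpleGraph V) (X A : Set V) : Set V :=
  ⋃ a ∈ A, cluster G X a

/-- The vertices available for following `A` while bypassing `B`: those of `A` and of the outer
boundary of `B`, except those of `B` itself. -/
def detour (G : SimpleGraph V) (A B : Set V) : Set V :=
  (A ∪ ⋃ b ∈ B, G.neighborSet b) \ B

lemma mem_detour_of_adj (hw : w ∈ B) (hwx : G.Adj w x) (hx : x ∉ B) : x ∈ detour G A B :=
  ⟨.inr (mem_biUnion hw hwx), hx⟩

lemma disjoint_detour_clusterHull : Disjoint (detour G A (clusterHull G X A)) X := by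
  refine Set.disjoint_left.2 fun x ⟨hx, hxB⟩ hxX ↦ hxB ?_
  rcases hx with hxA | hx
  · exact mem_biUnion hxA (mem_cluster_self hxX)
  · simp only [clusterHull, mem_iUnion] at hx ⊢
    obtain ⟨b, ⟨a, haA, hb⟩, hbx⟩ := hx
    exact ⟨a, haA, mem_cluster_of_adj hb hbx hxX⟩

variable [MeasurableSpace V] [MeasurableSingletonClass V]

lemma length_add_one_le_count {p : G.Walk v w} (hp : p.IsPath) (hpS : ∀ u ∈ p.support, u ∈ S) :
    (p.length + 1 : ℝ≥0∞) ≤ Measure.count S := calc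
  (p.length + 1 : ℝ≥0∞) = p.support.toFinset.card := by
    rw [List.toFinset_card_of_nodup hp.support_nodup, p.length_support, Nat.cast_succ]
  _ = Measure.count (p.support.toFinset : Set V) := (Measure.count_apply_finset _).symm
  _ ≤ Measure.count S := measure_mono fun u hu ↦ hpS u (by simpa using hu)

lemma count_detour_le [G.LocallyFinite] {Δ : ℕ} (hΔ : ∀ v, G.degree v ≤ Δ) (hB : B.Finite) :
    Measure.count (detour G A B) ≤ Measure.count A + Δ * Measure.count B := calc
  Measure.count (detour G A B)
      ≤ Measure.count (A ∪ ⋃ b ∈ hB.toFinset, (G.neighborFinset b : Set V)) :=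
    measure_mono fun x hx ↦ by simpa using hx.1
  _ ≤ Measure.count A + ∑ b ∈ hB.toFinset, Measure.count (G.neighborFinset b : Set V) :=
    (measure_union_le _ _).trans (by gcongr; exact measure_biUnion_finset_le _ _)
  _ ≤ Measure.count A + ∑ _b ∈ hB.toFinset, (Δ : ℝ≥0∞) := by
    gcongr with b
    rw [Measure.count_apply_finset, SimpleGraph.card_neighborFinset_eq_degree]
    exact_mod_cast hΔ b
  _ = Measure.count A + Δ * Measure.count B := by
    rw [Finset.sum_const, nsmul_eq_mul, Measure.count_apply_finite B hB, mul_comm]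

end Cluster

section Lattice

/-- The square lattice `ℤ²` as a graph. -/
def latticeGraph : SimpleGraph ZV where
  Adj := adjZ
  symm := ⟨fun a b (h : _ = _) ↦ show _ = _ by omega⟩
  loopless := ⟨fun a (h : _ = _) ↦ by simp at h⟩

/-- The graph of king moves on `ℤ²`: adjacency is `ℓ^∞` distance one. -/
def kingGraph : SimpleGraph ZV where
  Adj a b := max (a.1 - b.1).natAbs (a.2 - b.2).natAbs = 1
  symm := ⟨fun a b h ↦ by omega⟩
  loopless := ⟨fun a h ↦ by simp at h⟩

lemma kingGraph_adj_iff {a b : ZV} :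
    kingGraph.Adj a b ↔ max (a.1 - b.1).natAbs (a.2 - b.2).natAbs = 1 := Iff.rfl

lemma mem_erase_Icc_iff_mem_neighborSet_kingGraph {a b : ZV} :
    b ∈ (Finset.Icc (a - 1) (a + 1)).erase a ↔ b ∈ kingGraph.neighborSet a := by
  rw [SimpleGraph.mem_neighborSet, kingGraph_adj_iff, Finset.mem_erase, Finset.mem_Icc,
    Prod.le_def, Prod.le_def, Ne, Prod.ext_iff]
  simp only [Prod.fst_sub, Prod.snd_sub, Prod.fst_add, Prod.snd_add, Prod.fst_one, Prod.snd_one]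
  omega

instance : kingGraph.LocallyFinite :=
  fun a ↦ Fintype.ofFinset ((Finset.Icc (a - 1) (a + 1)).erase a)
    fun _ ↦ mem_erase_Icc_iff_mem_neighborSet_kingGraph

lemma degree_kingGraph (a : ZV) : kingGraph.degree a = 8 := by
  have hnbhd : kingGraph.neighborFinset a = (Finset.Icc (a - 1) (a + 1)).erase a := by
    ext b; rw [SimpleGraph.mem_neighborFinset, mem_erase_Icc_iff_mem_neighborSet_kingGraph]; rfl
  have hmem : a ∈ Finset.Icc (a - 1) (a + 1) := by simp
  have hside (z : ℤ) : (Finset.Icc (z - 1) (z + 1)).card = 3 := by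
    rw [Int.card_Icc]; omega
  rw [← SimpleGraph.card_neighborFinset_eq_degree, hnbhd, Finset.card_erase_of_mem hmem,
    Finset.Icc_prod_def, Finset.card_product]
  simp [hside]

lemma natAbs_fst_sub_le_length {v w : ZV} (p : kingGraph.Walk v w) :
    (v.1 - w.1).natAbs ≤ p.length := by
  induction p with
  | nil => simp
  | cons h p ih =>
    rw [kingGraph_adj_iff] at h
    rw [SimpleGraph.Walk.length_cons]
    omega

lemma natAbs_fst_sub_le_dist {v w : ZV} (h : kingGraph.Reachable v w) :
    (v.1 - w.1).natAbs ≤ kingGraph.dist v w := by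
  obtain ⟨p, hp⟩ := h.exists_walk_length_eq_dist
  exact hp ▸ natAbs_fst_sub_le_length p

/-- The vertices `(0, 0), (1, 0), …, (n, 0)`. -/
def axisSegment (n : ℕ) : Finset ZV :=
  (Finset.range (n + 1)).image fun k : ℕ ↦ ((k : ℤ), (0 : ℤ))

lemma mem_axisSegment {n k : ℕ} (hk : k ≤ n) : ((k : ℤ), (0 : ℤ)) ∈ axisSegment n :=
  Finset.mem_image_of_mem _ (Finset.mem_range_succ_iff.2 hk)

lemma card_axisSegment_le (n : ℕ) : (axisSegment n).card ≤ n + 1 :=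
  Finset.card_image_le.trans_eq (Finset.card_range _)

end Lattice

section Separation

variable {M : Type*} [AddCommGroup M] {A B : Set ZV} {f : ZV → M} {u v : ZV}

/-- The gradient of `f` along the edge `(u, v)`, set to zero on edges that do not meet `B`. When
`f` is constant along the lattice edges of a detour around `B`, this is a closed discrete
one-form. -/
def gradientNear (B : Set ZV) (f : ZV → M) (u v : ZV) : M :=
  if u ∈ B ∨ v ∈ B then f v - f u else 0

lemma gradientNear_eq_zero (hu : u ∉ B) (hv : v ∉ B) : gradientNear B f u v = 0 :=
  if_neg (not_or.2 ⟨hu, hv⟩)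

lemma gradientNear_eq_sub (h : u ∉ B → v ∉ B → f u = f v) : gradientNear B f u v = f v - f u := by
  by_cases hB : u ∈ B ∨ v ∈ B
  · exact if_pos hB
  · rw [not_or] at hB
    rw [gradientNear_eq_zero hB.1 hB.2, h hB.1 hB.2, sub_self]

/-- A unit square meeting `B` has its corners outside `B` on the detour, so the form is the full
gradient there; on any other square it is zero. -/
lemma gradientNear_closed
    (hf : ∀ u ∈ detour kingGraph A B, ∀ v ∈ detour kingGraph A B, latticeGraph.Adj u v → f u = f v)
    (x y : ℤ) :
    gradientNear B f (x, y) (x + 1, y) + gradientNear B f (x + 1, y) (x + 1, y + 1) =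
      gradientNear B f (x, y) (x, y + 1) + gradientNear B f (x, y + 1) (x + 1, y + 1) := by
  by_cases hsquare : ∃ b ∈ B, (b.1 = x ∨ b.1 = x + 1) ∧ (b.2 = y ∨ b.2 = y + 1)
  · obtain ⟨b, hb, hb₁, hb₂⟩ := hsquare
    have mem_detour (c : ZV) (hc₁ : c.1 = x ∨ c.1 = x + 1) (hc₂ : c.2 = y ∨ c.2 = y + 1)
        (hc : c ∉ B) : c ∈ detour kingGraph A B := by
      refine mem_detour_of_adj hb ?_ hc
      have hne : b ≠ c := fun h ↦ hc (h ▸ hb)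
      rw [Ne, Prod.ext_iff] at hne
      rw [kingGraph_adj_iff]
      omega
    have full {c d : ZV} (hcd : adjZ c d) (hc₁ : c.1 = x ∨ c.1 = x + 1)
        (hc₂ : c.2 = y ∨ c.2 = y + 1) (hd₁ : d.1 = x ∨ d.1 = x + 1)
        (hd₂ : d.2 = y ∨ d.2 = y + 1) : gradientNear B f c d = f d - f c :=
      gradientNear_eq_sub fun hc hd ↦
        hf c (mem_detour c hc₁ hc₂ hc) d (mem_detour d hd₁ hd₂ hd) hcd
    rw [full, full, full, full, sub_add_sub_cancel', sub_add_sub_cancel'] <;> simp [adjZ]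
  · have corner (c : ZV) (hc₁ : c.1 = x ∨ c.1 = x + 1) (hc₂ : c.2 = y ∨ c.2 = y + 1) : c ∉ B :=
      fun hc ↦ hsquare ⟨c, hc, hc₁, hc₂⟩
    rw [gradientNear_eq_zero, gradientNear_eq_zero, gradientNear_eq_zero, gradientNear_eq_zero] <;>
      exact corner _ (by simp) (by simp)

/-- Stokes on a row of `n` unit squares: `h` and `h'` are the values of a one-form on the lower and
upper edges, `e` those on the vertical edges. -/
lemma sum_range_eq_of_closed {h h' e : ℕ → M} (hclosed : ∀ k, h k + e (k + 1) = e k + h' k)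
    {n : ℕ} (hleft : e 0 = 0) (hright : e n = 0) :
    ∑ k ∈ Finset.range n, h k = ∑ k ∈ Finset.range n, h' k := by
  have hdiff (k : ℕ) : h k - h' k = e k - e (k + 1) := by
    rw [sub_eq_sub_iff_add_eq_add, hclosed]
  rw [← sub_eq_zero, ← Finset.sum_sub_distrib, Finset.sum_congr rfl fun k _ ↦ hdiff k,
    Finset.sum_range_sub', hleft, hright, sub_zero]

lemma exists_row_notMem (hB : B.Finite) : ∃ j : ℕ, ∀ x : ℤ, (x, (j : ℤ)) ∉ B := by
  obtain ⟨m, hm⟩ := (hB.image fun v ↦ v.2.toNat).bddAbove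
  refine ⟨m + 1, fun x hx ↦ ?_⟩
  have : ((m + 1 : ℕ) : ℤ).toNat ≤ m := hm ⟨_, hx, rfl⟩
  omega

lemma sum_gradientNear_axis {n : ℕ}
    (hf : ∀ u ∈ detour kingGraph (axisSegment n) B, ∀ v ∈ detour kingGraph (axisSegment n) B,
      latticeGraph.Adj u v → f u = f v) :
    ∑ k ∈ Finset.range n, gradientNear B f ((k : ℤ), 0) ((k : ℤ) + 1, 0) =
      f ((n : ℤ), 0) - f (0, 0) := by
  have hterm : ∀ k ∈ Finset.range n, gradientNear B f ((k : ℤ), 0) ((k : ℤ) + 1, 0) =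
      f (((k + 1 : ℕ) : ℤ), 0) - f ((k : ℤ), 0) := fun k hk ↦ by
    rw [Finset.mem_range] at hk
    rw [Nat.cast_succ]
    refine gradientNear_eq_sub fun h h' ↦ hf _ ⟨.inl (mem_axisSegment hk.le), h⟩ _
      ⟨.inl ?_, h'⟩ (by simp [latticeGraph, adjZ])
    exact_mod_cast mem_axisSegment hk
  rw [Finset.sum_congr rfl hterm, Finset.sum_range_sub fun k : ℕ ↦ f ((k : ℤ), 0), Nat.cast_zero]

/-- The integral of the closed form `gradientNear B f` along the row of height `j` does not depend
on `j`, and it vanishes for a row above `B`. -/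
lemma eq_of_forall_adj_detour {n : ℕ} (hB : B.Finite)
    (hleft : ∀ j : ℤ, ((0 : ℤ), j) ∉ B) (hright : ∀ j : ℤ, ((n : ℤ), j) ∉ B)
    (hf : ∀ u ∈ detour kingGraph (axisSegment n) B, ∀ v ∈ detour kingGraph (axisSegment n) B,
      latticeGraph.Adj u v → f u = f v) :
    f ((n : ℤ), 0) = f (0, 0) := by
  let rowSum (j : ℕ) : M :=
    ∑ k ∈ Finset.range n, gradientNear B f ((k : ℤ), (j : ℤ)) ((k : ℤ) + 1, (j : ℤ))
  have rowSum_succ (j : ℕ) : rowSum j = rowSum (j + 1) := by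
    refine sum_range_eq_of_closed
      (e := fun k ↦ gradientNear B f ((k : ℤ), (j : ℤ)) ((k : ℤ), (j : ℤ) + 1)) (fun k ↦ ?_)
      (gradientNear_eq_zero (hleft _) (hleft _)) (gradientNear_eq_zero (hright _) (hright _))
    simpa using gradientNear_closed hf k j
  have rowSum_eq (j : ℕ) : rowSum 0 = rowSum j := by
    induction j with
    | zero => rfl
    | succ j ih => exact ih.trans (rowSum_succ j)
  obtain ⟨j, hj⟩ := exists_row_notMem hB
  have hzero : rowSum 0 = 0 :=
    (rowSum_eq j).trans (Finset.sum_eq_zero fun _ _ ↦ gradientNear_eq_zero (hj _) (hj _))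
  rw [← sub_eq_zero, ← sum_gradientNear_axis hf]
  exact hzero

lemma mem_cluster_detour {n : ℕ} (hB : B.Finite)
    (hleft : ∀ j : ℤ, ((0 : ℤ), j) ∉ B) (hright : ∀ j : ℤ, ((n : ℤ), j) ∉ B) :
    ((n : ℤ), 0) ∈ cluster latticeGraph (detour kingGraph (axisSegment n) B) (0, 0) := by
  set C := cluster latticeGraph (detour kingGraph (axisSegment n) B) (0, 0)
  have horigin : ((0 : ℤ), (0 : ℤ)) ∈ C :=
    mem_cluster_self ⟨.inl (mem_axisSegment n.zero_le), hleft 0⟩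
  have hconst : C.indicator (1 : ZV → ℤ) ((n : ℤ), 0) = C.indicator 1 (0, 0) :=
    eq_of_forall_adj_detour hB hleft hright fun u hu v hv huv ↦ by
      simp only [indicator_apply, C, mem_cluster_iff_of_adj huv hu hv, Pi.one_apply]
  rw [indicator_of_mem horigin] at hconst
  exact mem_of_indicator_ne_zero (hconst.trans_ne one_ne_zero)

end Separation

section Paths

variable {V : Type*} (G : SimpleGraph V) [G.LocallyFinite]

/-- The vertex lists of the self-avoiding paths of `m` steps of `G` that start at `v`. -/
def pathsFrom : ℕ → V → Finset (List V)
  | 0, v => {[v]}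
  | m + 1, v => (G.neighborFinset v).biUnion fun w ↦
      ((pathsFrom m w).filter (v ∉ ·)).image (List.cons v)

/-- The number of self-avoiding paths of `G`, of any length, that start at `v` and stay in `X`. -/
def pathCount (X : Set V) (v : V) : ℝ≥0∞ :=
  ∑' m, (((pathsFrom G m v).filter fun l ↦ ∀ u ∈ l, u ∈ X).card : ℝ≥0∞)

variable {G} {v w : V}

lemma mem_pathsFrom_succ {m : ℕ} {l : List V} : l ∈ pathsFrom G (m + 1) v ↔
    ∃ w, G.Adj v w ∧ ∃ l' ∈ pathsFrom G m w, v ∉ l' ∧ v :: l' = l := by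
  simp [pathsFrom, and_assoc]

lemma nodup_and_length_of_mem_pathsFrom {m : ℕ} {l : List V} (hl : l ∈ pathsFrom G m v) :
    l.Nodup ∧ l.length = m + 1 := by
  induction m generalizing v l with
  | zero => simp [Finset.mem_singleton.1 hl]
  | succ m ih =>
    obtain ⟨w, -, l', hl', hv, rfl⟩ := mem_pathsFrom_succ.1 hl
    exact ⟨List.nodup_cons.2 ⟨hv, (ih hl').1⟩, by rw [List.length_cons, (ih hl').2]⟩

lemma support_mem_pathsFrom {p : G.Walk v w} (hp : p.IsPath) :
    p.support ∈ pathsFrom G p.length v := by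
  induction p with
  | nil => simp [pathsFrom]
  | cons h p ih =>
    rw [SimpleGraph.Walk.cons_isPath_iff] at hp
    exact mem_pathsFrom_succ.2 ⟨_, h, _, ih hp.1, hp.2, rfl⟩

lemma card_pathsFrom_le {Δ : ℕ} (hΔ : ∀ v, G.degree v ≤ Δ) (m : ℕ) (v : V) :
    (pathsFrom G m v).card ≤ Δ ^ m := by
  induction m generalizing v with
  | zero => simp [pathsFrom]
  | succ m ih => calc
      (pathsFrom G (m + 1) v).card ≤ G.degree v * Δ ^ m :=
        Finset.card_biUnion_le_card_mul _ _ _ fun w _ ↦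
          Finset.card_image_le.trans ((Finset.card_filter_le _ _).trans (ih w))
      _ ≤ Δ ^ (m + 1) := by rw [pow_succ']; gcongr; exact hΔ v

variable [MeasurableSpace V] [MeasurableSingletonClass V]

lemma count_cluster_le_pathCount (X : Set V) (v : V) :
    Measure.count (cluster G X v) ≤ pathCount G X v := by
  let paths (m : ℕ) : Finset (List V) := (pathsFrom G m v).filter fun l ↦ ∀ u ∈ l, u ∈ X
  let endpoints (m : ℕ) : Finset V := (paths m).image fun l ↦ l.getLast?.getD v
  have hcover : cluster G X v ⊆ ⋃ m, (endpoints m : Set V) := by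
    intro w hw
    obtain ⟨p, hp, hpX⟩ := exists_isPath_of_mem_cluster hw
    refine mem_iUnion.2 ⟨p.length, Finset.mem_coe.2 (Finset.mem_image.2 ⟨p.support, ?_, ?_⟩)⟩
    · exact Finset.mem_filter.2 ⟨support_mem_pathsFrom hp, hpX⟩
    · rw [List.getLast?_eq_some_getLast p.support_ne_nil, p.getLast_support, Option.getD_some]
  calc Measure.count (cluster G X v)
      ≤ ∑' m, Measure.count (endpoints m : Set V) :=
        (measure_mono hcover).trans (measure_iUnion_le _)
    _ ≤ pathCount G X v := by
      refine ENNReal.tsum_le_tsum fun m ↦ ?_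
      rw [Measure.count_apply_finset]
      exact_mod_cast Finset.card_image_le

lemma count_clusterHull_le_sum_pathCount (X : Set V) (A : Finset V) :
    Measure.count (clusterHull G X A) ≤ ∑ a ∈ A, pathCount G X a :=
  (measure_biUnion_finset_le A _).trans
    (Finset.sum_le_sum fun a _ ↦ count_cluster_le_pathCount X a)

end Paths

section RandomSet

variable {Ω V : Type*} [MeasurableSpace Ω] {μ : Measure Ω} {X : Ω → Set V} {q : ℝ≥0∞}

lemma measurableSet_forall_mem_list (hX : ∀ v, MeasurableSet {ω | v ∈ X ω}) (l : List V) :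
    MeasurableSet {ω | ∀ v ∈ l, v ∈ X ω} := by
  simp only [ofPred_forall]
  exact MeasurableSet.biInter l.finite_toSet.countable fun v _ ↦ hX v

lemma measurable_card_filter_forall_mem (hX : ∀ v, MeasurableSet {ω | v ∈ X ω})
    (s : Finset (List V)) :
    Measurable fun ω ↦ ((s.filter fun l ↦ ∀ v ∈ l, v ∈ X ω).card : ℝ≥0∞) := by
  simp only [Finset.natCast_card_filter]
  exact Finset.measurable_fun_sum _ fun l _ ↦
    Measurable.ite (measurableSet_forall_mem_list hX l) measurable_const measurable_const

lemma lintegral_card_filter_forall_mem (hX : ∀ v, MeasurableSet {ω | v ∈ X ω})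
    (s : Finset (List V)) :
    ∫⁻ ω, ((s.filter fun l ↦ ∀ v ∈ l, v ∈ X ω).card : ℝ≥0∞) ∂μ =
      ∑ l ∈ s, μ {ω | ∀ v ∈ l, v ∈ X ω} := by
  have hevent := measurableSet_forall_mem_list hX
  simp only [Finset.natCast_card_filter]
  rw [lintegral_finsetSum _ fun l _ ↦
    Measurable.ite (hevent l) measurable_const measurable_const]
  refine Finset.sum_congr rfl fun l _ ↦ ?_
  simp only [← lintegral_indicator_one (hevent l), indicator_apply, mem_ofPred_eq, Pi.one_apply]

lemma measurable_pathCount (hX : ∀ v, MeasurableSet {ω | v ∈ X ω}) (G : SimpleGraph V)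
    [G.LocallyFinite] (v : V) : Measurable fun ω ↦ pathCount G (X ω) v :=
  Measurable.tsum fun m ↦ measurable_card_filter_forall_mem hX (pathsFrom G m v)

/-- The random set `X` contains each finite set with at most the probability that a Bernoulli set
of density `q` does. -/
def IsDominated (μ : Measure Ω) (X : Ω → Set V) (q : ℝ≥0∞) : Prop :=
  ∀ F : Finset V, μ {ω | ∀ v ∈ F, v ∈ X ω} ≤ q ^ F.card

namespace IsDominated

lemma mono {q' : ℝ≥0∞} (hX : IsDominated μ X q) (hq : q ≤ q') : IsDominated μ X q' :=
  fun F ↦ (hX F).trans (by gcongr)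

lemma image_fst {β : Type*} [Fintype β] {Y : Ω → Set (V × β)} (hY : IsDominated μ Y q) :
    IsDominated μ (fun ω ↦ Prod.fst '' Y ω) (Fintype.card β * q) := by
  intro F
  let graph (g : F → β) : Finset (V × β) :=
    Finset.univ.map ⟨fun v : F ↦ ((v : V), g v), fun v w h ↦ Subtype.ext (congrArg Prod.fst h)⟩
  have hcover : {ω | ∀ v ∈ F, v ∈ Prod.fst '' Y ω} ⊆ ⋃ g, {ω | ∀ e ∈ graph g, e ∈ Y ω} := by
    intro ω hω
    have hfibre (v : F) : ∃ b, ((v : V), b) ∈ Y ω := by simpa using hω v v.2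
    choose g hg using hfibre
    refine mem_iUnion.2 ⟨g, fun e he ↦ ?_⟩
    obtain ⟨v, -, rfl⟩ := Finset.mem_map.1 he
    exact hg v
  calc μ {ω | ∀ v ∈ F, v ∈ Prod.fst '' Y ω}
      ≤ ∑ g, μ {ω | ∀ e ∈ graph g, e ∈ Y ω} :=
        (measure_mono hcover).trans (measure_iUnion_fintype_le μ _)
    _ ≤ ∑ _g : F → β, q ^ F.card :=
        Finset.sum_le_sum fun g _ ↦ (hY (graph g)).trans_eq (by simp [graph])
    _ = (Fintype.card β * q) ^ F.card := by simp [mul_pow]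

lemma measure_forall_mem_list_le (hX : IsDominated μ X q) {l : List V} (hl : l.Nodup) :
    μ {ω | ∀ v ∈ l, v ∈ X ω} ≤ q ^ l.length := by
  simpa [List.toFinset_card_of_nodup hl] using hX l.toFinset

variable {G : SimpleGraph V} [G.LocallyFinite] {Δ : ℕ}

lemma sum_measure_path_le (hX : IsDominated μ X q) (hΔ : ∀ v, G.degree v ≤ Δ)
    (hq : Δ * q ≤ 2⁻¹) (m : ℕ) (v : V) :
    ∑ l ∈ pathsFrom G m v, μ {ω | ∀ u ∈ l, u ∈ X ω} ≤ q * 2⁻¹ ^ m := calc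
  ∑ l ∈ pathsFrom G m v, μ {ω | ∀ u ∈ l, u ∈ X ω}
      ≤ ∑ _l ∈ pathsFrom G m v, q ^ (m + 1) := Finset.sum_le_sum fun l hl ↦ by
        obtain ⟨hnodup, hlength⟩ := nodup_and_length_of_mem_pathsFrom hl
        exact hlength ▸ hX.measure_forall_mem_list_le hnodup
  _ ≤ (Δ ^ m : ℕ) * q ^ (m + 1) := by
        rw [Finset.sum_const, nsmul_eq_mul]
        gcongr
        exact card_pathsFrom_le hΔ m v
  _ = q * (Δ * q) ^ m := by push_cast; ring
  _ ≤ q * 2⁻¹ ^ m := by gcongr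

lemma measure_exists_le_dist_le (hX : IsDominated μ X q) (hΔ : ∀ v, G.degree v ≤ Δ)
    (hq : Δ * q ≤ 2⁻¹) (j : ℕ) (v : V) :
    μ {ω | ∃ w ∈ cluster G (X ω) v, j ≤ G.dist v w} ≤ 2 * q * 2⁻¹ ^ j := by
  have hcover : {ω | ∃ w ∈ cluster G (X ω) v, j ≤ G.dist v w} ⊆
      ⋃ i, ⋃ l ∈ pathsFrom G (i + j) v, {ω | ∀ u ∈ l, u ∈ X ω} := by
    rintro ω ⟨w, hw, hj⟩
    obtain ⟨p, hp, hpX⟩ := exists_isPath_of_mem_cluster hw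
    obtain ⟨i, hi⟩ := Nat.exists_eq_add_of_le' (hj.trans (SimpleGraph.dist_le p))
    exact mem_iUnion.2 ⟨i, mem_biUnion (hi ▸ support_mem_pathsFrom hp) hpX⟩
  calc μ {ω | ∃ w ∈ cluster G (X ω) v, j ≤ G.dist v w}
      ≤ ∑' i, ∑ l ∈ pathsFrom G (i + j) v, μ {ω | ∀ u ∈ l, u ∈ X ω} :=
        (measure_mono hcover).trans ((measure_iUnion_le _).trans
          (ENNReal.tsum_le_tsum fun i ↦ measure_biUnion_finset_le _ _))
    _ ≤ ∑' i, q * 2⁻¹ ^ j * 2⁻¹ ^ i := ENNReal.tsum_le_tsum fun i ↦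
        (hX.sum_measure_path_le hΔ hq (i + j) v).trans_eq (by ring)
    _ = 2 * q * 2⁻¹ ^ j := by
        rw [ENNReal.tsum_mul_left, ENNReal.tsum_geometric, ENNReal.one_sub_inv_two, inv_inv]
        ring

lemma measure_exists_index_le_dist_le (hX : IsDominated μ X q) (hΔ : ∀ v, G.degree v ≤ Δ)
    (hq : Δ * q ≤ 2⁻¹) (s : ℕ → V) :
    μ {ω | ∃ j, ∃ w ∈ cluster G (X ω) (s j), j ≤ G.dist (s j) w} ≤ 4 * q := calc
  μ {ω | ∃ j, ∃ w ∈ cluster G (X ω) (s j), j ≤ G.dist (s j) w}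
      ≤ ∑' j, μ {ω | ∃ w ∈ cluster G (X ω) (s j), j ≤ G.dist (s j) w} := by
        rw [ofPred_exists]
        exact measure_iUnion_le _
  _ ≤ ∑' j : ℕ, 2 * q * 2⁻¹ ^ j :=
        ENNReal.tsum_le_tsum fun j ↦ hX.measure_exists_le_dist_le hΔ hq j (s j)
  _ = 4 * q := by
        rw [ENNReal.tsum_mul_left, ENNReal.tsum_geometric, ENNReal.one_sub_inv_two, inv_inv]
        ring

lemma lintegral_pathCount_le (hX : IsDominated μ X q) (hmeas : ∀ v, MeasurableSet {ω | v ∈ X ω})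
    (hΔ : ∀ v, G.degree v ≤ Δ) (hq : Δ * q ≤ 2⁻¹) (v : V) :
    ∫⁻ ω, pathCount G (X ω) v ∂μ ≤ 2 * q := calc
  ∫⁻ ω, pathCount G (X ω) v ∂μ
      = ∑' m, ∑ l ∈ pathsFrom G m v, μ {ω | ∀ u ∈ l, u ∈ X ω} := by
        simp_rw [← lintegral_card_filter_forall_mem hmeas]
        exact lintegral_tsum fun m ↦ (measurable_card_filter_forall_mem hmeas _).aemeasurable
  _ ≤ ∑' m : ℕ, q * 2⁻¹ ^ m := ENNReal.tsum_le_tsum fun m ↦ hX.sum_measure_path_le hΔ hq m v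
  _ = 2 * q := by
        rw [ENNReal.tsum_mul_left, ENNReal.tsum_geometric, ENNReal.one_sub_inv_two, inv_inv,
          mul_comm]

lemma mul_measure_le_count_clusterHull_le [MeasurableSpace V] [MeasurableSingletonClass V]
    (hX : IsDominated μ X q) (hmeas : ∀ v, MeasurableSet {ω | v ∈ X ω})
    (hΔ : ∀ v, G.degree v ≤ Δ) (hq : Δ * q ≤ 2⁻¹) (A : Finset V) (t : ℝ≥0∞) :
    t * μ {ω | t ≤ Measure.count (clusterHull G (X ω) A)} ≤ A.card * (2 * q) := calc
  t * μ {ω | t ≤ Measure.count (clusterHull G (X ω) A)}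
      ≤ t * μ {ω | t ≤ ∑ a ∈ A, pathCount G (X ω) a} := by
        gcongr with ω
        exact count_clusterHull_le_sum_pathCount (X ω) A
  _ ≤ ∫⁻ ω, ∑ a ∈ A, pathCount G (X ω) a ∂μ :=
        mul_meas_ge_le_lintegral
          (Finset.measurable_fun_sum _ fun a _ ↦ measurable_pathCount hmeas G a) t
  _ = ∑ a ∈ A, ∫⁻ ω, pathCount G (X ω) a ∂μ :=
        lintegral_finsetSum _ fun a _ ↦ measurable_pathCount hmeas G a
  _ ≤ ∑ _a ∈ A, 2 * q := Finset.sum_le_sum fun a _ ↦ hX.lintegral_pathCount_le hmeas hΔ hq a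
  _ = A.card * (2 * q) := by rw [Finset.sum_const, nsmul_eq_mul]

end IsDominated

end RandomSet

section Percolation

variable {ω : CfgZ} {n : ℕ} {u v : ZV}

/-- The set of open bonds of a configuration. -/
def openBonds (ω : CfgZ) : Set Bond :=
  {e | ω e = true}

/-- The lower left endpoints of the open bonds. These are the vertices that closed paths are made
to avoid: every bond between two vertices outside this set is closed. -/
def openTails (ω : CfgZ) : Set ZV :=
  Prod.fst '' openBonds ω

lemma measurableSet_mem_openTails (v : ZV) : MeasurableSet {ω | v ∈ openTails ω} := by
  have hopen (e : Bond) : MeasurableSet {ω : CfgZ | ω e = true} :=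
    measurableSet_eq_fun (measurable_pi_apply e) measurable_const
  have hunion : {ω | v ∈ openTails ω} = ⋃ d, {ω : CfgZ | ω (v, d) = true} := by
    ext ω; simp [openTails, openBonds]
  exact hunion ▸ MeasurableSet.iUnion fun d ↦ hopen (v, d)

lemma IsBernoulliBondFamily.isDominated {P : ℝ → Measure CfgZ} (hP : IsBernoulliBondFamily P)
    {p : ℝ} (hp₀ : 0 ≤ p) (hp₁ : p ≤ 1) : IsDominated (P p) openBonds (ENNReal.ofReal p) := by
  intro F
  refine ((hP p hp₀ hp₁).2 F fun _ ↦ true).le.trans_eq ?_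
  simp only [if_true, Finset.prod_const]

lemma isDominated_openTails {μ : Measure CfgZ} {q : ℝ≥0∞} (hμ : IsDominated μ openBonds q) :
    IsDominated μ openTails (2 * q) := by
  have htails : IsDominated μ openTails (Fintype.card Bool * q) := hμ.image_fst
  simpa using htails

lemma bondOf_fst (u v : ZV) : (bondOf u v).1 = u ∨ (bondOf u v).1 = v := by
  unfold bondOf
  split_ifs <;> simp

lemma closedStep_of_notMem_openTails (huv : adjZ u v) (hu : u ∉ openTails ω)
    (hv : v ∉ openTails ω) : closedStep ω u v := by
  refine ⟨huv, Bool.eq_false_iff.2 fun hopen ↦ ?_⟩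
  have htail : (bondOf u v).1 ∈ openTails ω := mem_image_of_mem _ hopen
  rcases bondOf_fst u v with h | h <;> rw [h] at htail <;> contradiction

lemma chemDist_self (ω : CfgZ) (v : ZV) : chemDist ω v v = 0 :=
  nonpos_iff_eq_zero.1 <| iInf_le_of_le
    ⟨[v], List.isChain_singleton v, List.head?_cons, List.getLast?_singleton⟩ (by simp)

lemma chemDist_le_length (p : latticeGraph.Walk u v)
    (hp : Disjoint {x | x ∈ p.support} (openTails ω)) :
    chemDist ω u v ≤ p.length := by
  have hclosed : p.support.IsChain (closedStep ω) :=
    p.isChain_adj_support.imp_of_mem_imp fun a b ha hb hab ↦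
      closedStep_of_notMem_openTails hab (hp.notMem_of_mem_left ha) (hp.notMem_of_mem_left hb)
  have hhead : p.support.head? = some u := by
    rw [List.head?_eq_some_head p.support_ne_nil, p.head_support]
  have hlast : p.support.getLast? = some v := by
    rw [List.getLast?_eq_some_getLast p.support_ne_nil, p.getLast_support]
  refine iInf_le_of_le ⟨p.support, hclosed, hhead, hlast⟩ ?_
  simp

/-- The region to be bypassed on the way along the axis: the king clusters of `openTails ω` that
meet the axis segment. -/
def obstacle (ω : CfgZ) (n : ℕ) : Set ZV :=
  clusterHull kingGraph (openTails ω) (axisSegment n)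

lemma chemDist_le_add_count_obstacle (hleft : ∀ j : ℤ, ((0 : ℤ), j) ∉ obstacle ω n)
    (hright : ∀ j : ℤ, ((n : ℤ), j) ∉ obstacle ω n) :
    chemDist ω (0, 0) ((n : ℤ), 0) ≤ n + 8 * Measure.count (obstacle ω n) := by
  rcases (obstacle ω n).finite_or_infinite with hfin | hinf
  · obtain ⟨p, hp, hpdetour⟩ := exists_isPath_of_mem_cluster (mem_cluster_detour hfin hleft hright)
    have hlength : (p.length + 1 : ℝ≥0∞) ≤ n + 8 * Measure.count (obstacle ω n) + 1 := calc
      (p.length + 1 : ℝ≥0∞) ≤ Measure.count (detour kingGraph (axisSegment n) (obstacle ω n)) :=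
        length_add_one_le_count hp hpdetour
      _ ≤ Measure.count (axisSegment n : Set ZV) + (8 : ℕ) * Measure.count (obstacle ω n) :=
        count_detour_le (fun a ↦ (degree_kingGraph a).le) hfin
      _ ≤ (n + 1 : ℕ) + 8 * Measure.count (obstacle ω n) := by
        rw [Measure.count_apply_finset]
        gcongr
        · exact card_axisSegment_le n
        · norm_num
      _ = n + 8 * Measure.count (obstacle ω n) + 1 := by push_cast; ring
    exact (chemDist_le_length p (disjoint_detour_clusterHull.mono_left hpdetour)).trans
      (ENNReal.le_of_add_le_add_right ENNReal.one_ne_top hlength)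
  · simp [Measure.count_apply_infinite hinf]

lemma IsDominated.measure_exists_column_mem_clusterHull_le {Ω : Type*} [MeasurableSpace Ω]
    {μ : Measure Ω} {X : Ω → Set ZV} {q : ℝ≥0∞} (hX : IsDominated μ X q) (hq : 8 * q ≤ 2⁻¹)
    {A : Set ZV} {s : ℕ → ZV} (hA : A ⊆ range s) {c : ℤ} (hs : ∀ k, k ≤ ((s k).1 - c).natAbs) :
    μ {ω | ∃ j : ℤ, (c, j) ∈ clusterHull kingGraph (X ω) A} ≤ 4 * q := by
  refine le_trans (measure_mono ?_) (hX.measure_exists_index_le_dist_le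
    (fun a ↦ (degree_kingGraph a).le) (by exact_mod_cast hq) s)
  rintro ω ⟨j, hj⟩
  simp only [clusterHull, mem_iUnion] at hj
  obtain ⟨a, ha, p, hp⟩ := hj
  obtain ⟨k, rfl⟩ := hA ha
  exact ⟨k, _, ⟨p, hp⟩, (hs k).trans (natAbs_fst_sub_le_dist p.reachable)⟩

variable {μ : Measure CfgZ} {q : ℝ≥0∞}

lemma measure_exists_left_mem_obstacle_le (hμ : IsDominated μ openTails q) (hq : 8 * q ≤ 2⁻¹)
    (n : ℕ) : μ {ω | ∃ j : ℤ, ((0 : ℤ), j) ∈ obstacle ω n} ≤ 4 * q := by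
  refine hμ.measure_exists_column_mem_clusterHull_le hq (s := fun k ↦ ((k : ℤ), 0))
    (fun a ha ↦ ?_) (fun k ↦ by simp)
  obtain ⟨k, -, rfl⟩ := Finset.mem_image.1 (Finset.mem_coe.1 ha)
  exact mem_range_self k

lemma measure_exists_right_mem_obstacle_le (hμ : IsDominated μ openTails q) (hq : 8 * q ≤ 2⁻¹)
    (n : ℕ) : μ {ω | ∃ j : ℤ, ((n : ℤ), j) ∈ obstacle ω n} ≤ 4 * q := by
  refine hμ.measure_exists_column_mem_clusterHull_le hq (s := fun k ↦ ((n : ℤ) - k, 0))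
    (fun a ha ↦ ?_) (fun k ↦ by simp)
  obtain ⟨k, hk, rfl⟩ := Finset.mem_image.1 (Finset.mem_coe.1 ha)
  have hkn : k ≤ n := Finset.mem_range_succ_iff.1 hk
  exact ⟨n - k, by simp [hkn]⟩

lemma measure_mul_le_count_obstacle_le (hμ : IsDominated μ openTails q) (hq : 8 * q ≤ 2⁻¹)
    (hn : n ≠ 0) {c : ℝ≥0∞} (hc₀ : c ≠ 0) (hc : c ≠ ∞) :
    μ {ω | c * n ≤ Measure.count (obstacle ω n)} ≤ 4 * q / c := by
  have hmarkov : c * n * μ {ω | c * n ≤ Measure.count (obstacle ω n)} ≤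
      (axisSegment n).card * (2 * q) :=
    hμ.mul_measure_le_count_clusterHull_le measurableSet_mem_openTails
      (fun a ↦ (degree_kingGraph a).le) (by exact_mod_cast hq) (axisSegment n) (c * n)
  have hcard : (axisSegment n).card ≤ 2 * n := (card_axisSegment_le n).trans (by omega)
  rw [ENNReal.le_div_iff_mul_le (.inl hc₀) (.inl hc)]
  refine (ENNReal.mul_le_mul_iff_right (Nat.cast_ne_zero.2 hn) (ENNReal.natCast_ne_top n)).1 ?_
  calc n * (μ {ω | c * n ≤ Measure.count (obstacle ω n)} * c)
      = c * n * μ {ω | c * n ≤ Measure.count (obstacle ω n)} := by ring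
    _ ≤ (axisSegment n).card * (2 * q) := hmarkov
    _ ≤ (2 * n : ℕ) * (2 * q) := by gcongr
    _ = n * (4 * q) := by push_cast; ring

lemma measure_lt_chemDist_le (hμ : IsDominated μ openTails q) (hq : 8 * q ≤ 2⁻¹)
    {c : ℝ≥0∞} (hc₀ : c ≠ 0) (hc : c ≠ ∞) (n : ℕ) :
    μ {ω | (1 + 8 * c) * n < chemDist ω (0, 0) ((n : ℤ), 0)} ≤ 8 * q + 4 * q / c := by
  rcases eq_or_ne n 0 with rfl | hn
  · simp [chemDist_self]
  have hcover : {ω | (1 + 8 * c) * n < chemDist ω (0, 0) ((n : ℤ), 0)} ⊆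
      {ω | ∃ j : ℤ, ((0 : ℤ), j) ∈ obstacle ω n} ∪ {ω | ∃ j : ℤ, ((n : ℤ), j) ∈ obstacle ω n} ∪
        {ω | c * n ≤ Measure.count (obstacle ω n)} := by
    intro ω hω
    by_contra! hgood
    simp only [mem_union, mem_ofPred_eq, not_or, not_exists, not_le] at hgood
    obtain ⟨⟨hleft, hright⟩, hcount⟩ := hgood
    refine (mem_ofPred_eq ▸ hω).not_ge ?_
    calc chemDist ω (0, 0) ((n : ℤ), 0) ≤ n + 8 * Measure.count (obstacle ω n) :=
        chemDist_le_add_count_obstacle hleft hright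
      _ ≤ n + 8 * (c * n) := by gcongr
      _ = (1 + 8 * c) * n := by ring
  calc μ {ω | (1 + 8 * c) * n < chemDist ω (0, 0) ((n : ℤ), 0)}
      ≤ 4 * q + 4 * q + 4 * q / c :=
        (measure_mono hcover).trans <| (measure_union_le _ _).trans <| add_le_add
          ((measure_union_le _ _).trans <| add_le_add
            (measure_exists_left_mem_obstacle_le hμ hq n)
            (measure_exists_right_mem_obstacle_le hμ hq n))
          (measure_mul_le_count_obstacle_le hμ hq hn hc₀ hc)
    _ = 8 * q + 4 * q / c := by ring

lemma ofReal_one_sub_le_measure_chemDist_le [IsProbabilityMeasure μ] {p ε : ℝ}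
    (hμ : IsDominated μ openBonds (ENNReal.ofReal p)) (hp₀ : 0 ≤ p) (hp : p ≤ 1 / 32)
    (hε : 0 < ε) (n : ℕ) :
    ENNReal.ofReal (1 - (16 * p + 64 * p / ε)) ≤
      μ {ω | chemDist ω (0, 0) ((n : ℤ), 0) ≤ ENNReal.ofReal ((1 + ε) * n)} := by
  set good := {ω | chemDist ω (0, 0) ((n : ℤ), 0) ≤ ENNReal.ofReal ((1 + ε) * n)} with hgood
  have hq : 8 * (2 * ENNReal.ofReal p) ≤ 2⁻¹ := calc
    8 * (2 * ENNReal.ofReal p) = ENNReal.ofReal (8 * (2 * p)) := by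
      simp [ENNReal.ofReal_mul]
    _ ≤ ENNReal.ofReal 2⁻¹ := ENNReal.ofReal_le_ofReal (by linarith)
    _ = 2⁻¹ := by rw [ENNReal.ofReal_inv_of_pos two_pos, ENNReal.ofReal_ofNat]
  have hlength : ENNReal.ofReal ((1 + ε) * n) = (1 + 8 * ENNReal.ofReal (ε / 8)) * n := by
    rw [ENNReal.ofReal_mul (by positivity), ENNReal.ofReal_natCast, ENNReal.ofReal_add zero_le_one
      hε.le, ENNReal.ofReal_one, ENNReal.ofReal_div_of_pos (by norm_num), ENNReal.ofReal_ofNat,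
      ENNReal.mul_div_cancel (by norm_num) (by norm_num)]
  have hbad : μ goodᶜ ≤ ENNReal.ofReal (16 * p + 64 * p / ε) := calc
    μ goodᶜ ≤ 8 * (2 * ENNReal.ofReal p) + 4 * (2 * ENNReal.ofReal p) / ENNReal.ofReal (ε / 8) := by
      rw [hgood, hlength, compl_ofPred]
      simp only [not_le]
      exact measure_lt_chemDist_le (isDominated_openTails hμ) hq (by simpa) ENNReal.ofReal_ne_top n
    _ = ENNReal.ofReal (8 * (2 * p) + 4 * (2 * p) / (ε / 8)) := by
      rw [ENNReal.ofReal_add (by positivity) (by positivity),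
        ENNReal.ofReal_div_of_pos (show 0 < ε / 8 by positivity)]
      simp [ENNReal.ofReal_mul]
    _ = ENNReal.ofReal (16 * p + 64 * p / ε) := by
      congr 1; field_simp; ring
  rw [ENNReal.ofReal_sub _ (by positivity), ENNReal.ofReal_one, tsub_le_iff_right]
  calc 1 = μ univ := measure_univ.symm
    _ ≤ μ good + μ goodᶜ := measure_univ_le_add_compl good
    _ ≤ μ good + ENNReal.ofReal (16 * p + 64 * p / ε) := by gcongr

end Percolation

theorem chemical_distance_close_to_euclidean_general {ε : ℝ} (hε : 0 < ε) :
    ∃ p₀ : ℝ, 0 < p₀ ∧ p₀ < 1 / 2 ∧ ∀ (μ : Measure CfgZ) [IsProbabilityMeasure μ],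
      IsDominated μ openBonds (ENNReal.ofReal p₀) → ∀ n : ℕ,
        ENNReal.ofReal (1 - ε) ≤
          μ {ω | chemDist ω (0, 0) ((n : ℤ), 0) ≤ ENNReal.ofReal ((1 + ε) * n)} := by
  let p₀ : ℝ := min (1 / 32) (ε ^ 2 / (16 * (ε + 4)))
  have hpos : 0 < p₀ := by positivity
  have hp₀ : p₀ ≤ 1 / 32 := min_le_left _ _
  have hfail : 16 * p₀ + 64 * p₀ / ε ≤ ε := by
    have hmin : p₀ ≤ ε ^ 2 / (16 * (ε + 4)) := min_le_right _ _
    rw [le_div_iff₀ (by positivity)] at hmin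
    calc 16 * p₀ + 64 * p₀ / ε = p₀ * (16 * (ε + 4)) / ε := by field_simp; ring
      _ ≤ ε := by rwa [div_le_iff₀ hε, ← sq]
  refine ⟨p₀, hpos, by linarith, fun μ _ hμ n ↦ ?_⟩
  exact (ENNReal.ofReal_le_ofReal (by linarith)).trans
    (ofReal_one_sub_le_measure_chemDist_le hμ hpos.le hp₀ hε n)

/-- For any `ε > 0` there exists `p₀ = p₀(ε) ∈ (0,1/2)` such that for
all `p ∈ [0,p₀]` and all sufficiently large `n` (depending on `ε`):
`P[D(0,(n,0)) ≤ (1+ε)n] ≥ 1 − ε`. -/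
theorem chemical_distance_close_to_euclidean
    (P : ℝ → Measure CfgZ) (hP : IsBernoulliBondFamily P) :
    ∀ ε : ℝ, 0 < ε → ∃ p₀ : ℝ, 0 < p₀ ∧ p₀ < 1 / 2 ∧ ∃ N : ℕ,
      ∀ p : ℝ, 0 ≤ p → p ≤ p₀ → ∀ n : ℕ, N ≤ n →
        ENNReal.ofReal (1 - ε) ≤
          P p {ω : CfgZ | chemDist ω (0, 0) ((n : ℤ), 0)
                ≤ ENNReal.ofReal ((1 + ε) * (n : ℝ))} := by
  intro ε hε
  obtain ⟨p₀, hp₀, hp₀_lt, hgeneral⟩ := chemical_distance_close_to_euclidean_general hε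
  refine ⟨p₀, hp₀, hp₀_lt, 0, fun p hp hpp₀ n _ ↦ ?_⟩
  have hp_le_one : p ≤ 1 := by linarith
  have : IsProbabilityMeasure (P p) := (hP p hp hp_le_one).1
  exact hgeneral (P p)
    ((hP.isDominated hp hp_le_one).mono (ENNReal.ofReal_le_ofReal hpp₀)) n

end Z2BondPercolation
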